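/- arXiv:1712.04685 — 2 statements merged into one kernel-verified Lean document; each statement's English description precedes it below -/
import Mathlib

section
/- Assume Assumption 1 holds for some η₀ > 0 and 0 < η ≤ η₀. For all f ∈ H¹_per(0,1): ⟨f, H̃f⟩ = ⟨f, H^N f⟩ + 2 Σ_{I∈{0,a}} ⟨⟨p̃^I,f⟩ᵀ(Φ_I − Φ̃_I), H(f − ⟨p̃^I,f⟩ᵀ Φ̃_I)⟩ and ⟨f, S̃f⟩ = ⟨f, S^N f⟩ + 2 Σ_{I∈{0,a}} ⟨⟨p̃^I,f⟩ᵀ(Φ_I − Φ̃_I), f − ⟨p̃^I,f⟩ᵀ Φ̃_I⟩. -/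
open MeasureTheory Real

noncomputable section

/-- A `1`-periodic `H¹` function on `ℝ`: absolutely continuous with locally
integrable, square-integrable weak derivative `f'`. -/
structure H1per where
  f : ℝ → ℝ
  f' : ℝ → ℝ
  periodic : Function.Periodic f 1
  periodic' : Function.Periodic f' 1
  cont : Continuous f
  meas' : Measurable f'
  locInt : ∀ x y : ℝ, IntervalIntegrable f' volume x y
  sqInt : IntervalIntegrable (fun t => (f' t) ^ 2) volume 0 1
  ftc : ∀ x : ℝ, f x = f 0 + ∫ t in (0:ℝ)..x, f' t

/-- A `1`-periodic `L²` function. -/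
structure L2per where
  f : ℝ → ℝ
  meas : Measurable f
  periodic : Function.Periodic f 1
  sqInt : IntervalIntegrable (fun t => (f t) ^ 2) volume 0 1

/-- The `L²_per(0,1)` inner product `⟨f,g⟩ = ∫₀¹ f g`. -/
def L2inner (f g : ℝ → ℝ) : ℝ := ∫ x in (0:ℝ)..1, f x * g x

/-- The `L²_per(0,1)` norm. -/
def L2norm (f : ℝ → ℝ) : ℝ := Real.sqrt (∫ x in (0:ℝ)..1, (f x) ^ 2)

/-- The `H¹_per(0,1)` norm. -/
def H1norm (u : H1per) : ℝ :=
  Real.sqrt ((∫ x in (0:ℝ)..1, (u.f x) ^ 2) + ∫ x in (0:ℝ)..1, (u.f' x) ^ 2)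

/-- Sup norm of `f` on a set `s`. -/
def supNormOn (f : ℝ → ℝ) (s : Set ℝ) : ℝ := sSup ((fun x => |f x|) '' s)

/-- Global sup norm of `f`. -/
def supNorm (f : ℝ → ℝ) : ℝ := sSup (Set.range fun x => |f x|)

/-- The interval `(I-η, I+η)`. -/
def window (I η : ℝ) : Set ℝ := Set.Ioo (I - η) (I + η)

/-- Even part of `f` about the point `I`. -/
def evenPartAt (I : ℝ) (f : ℝ → ℝ) : ℝ → ℝ := fun x => (f x + f (2 * I - x)) / 2

/-- Derivative of the even part of `f` about `I`, expressed via `f'`. -/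
def evenPartDerivAt (I : ℝ) (f' : ℝ → ℝ) : ℝ → ℝ := fun x => (f' x - f' (2 * I - x)) / 2

/-- Quadratic form of `H = -d²/dx² - Z₀ Σ_k δ_k - Z_a Σ_k δ_{k+a}` on raw
(function, weak derivative) pairs. -/
def aHraw (Z0 Za A : ℝ) (u u' v v' : ℝ → ℝ) : ℝ :=
  (∫ x in (0:ℝ)..1, u' x * v' x) - Z0 * (u 0 * v 0) - Za * (u A * v A)

/-- Quadratic form of `H` on `H¹_per`. -/
def aH (Z0 Za A : ℝ) (u v : H1per) : ℝ := aHraw Z0 Za A u.f u.f' v.f v.f'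

/-- Quadratic form of the atomic Hamiltonian `-d²/dx² - Z Σ_k δ_{I+k}`. -/
def aAtom (Z I : ℝ) (u v : H1per) : ℝ :=
  (∫ x in (0:ℝ)..1, u.f' x * v.f' x) - Z * (u.f I * v.f I)

/-- `(E, ψ)` is an eigenpair of `H` (in the weak, i.e. quadratic form, sense). -/
def IsEigenpair (Z0 Za A : ℝ) (E : ℝ) (ψ : H1per) : Prop :=
  (∃ x, ψ.f x ≠ 0) ∧ ∀ v : H1per, aH Z0 Za A ψ v = E * L2inner ψ.f v.f

/-- `E` is the lowest eigenvalue of `H`. -/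
def IsLowestEigenvalue (Z0 Za A : ℝ) (E : ℝ) : Prop :=
  (∃ ψ, IsEigenpair Z0 Za A E ψ) ∧ ∀ E' ψ, IsEigenpair Z0 Za A E' ψ → E ≤ E'

/-- Generalized eigenpair of the pencil `(A, B)` of bilinear forms on `H¹_per`. -/
def IsGenEigenpair (A B : H1per → H1per → ℝ) (E : ℝ) (f : H1per) : Prop :=
  (∃ x, f.f x ≠ 0) ∧ ∀ v : H1per, A f v = E * B f v

/-- `E` is the lowest generalized eigenvalue of the pencil `(A, B)`. -/
def IsLowestGenEigenvalue (A B : H1per → H1per → ℝ) (E : ℝ) : Prop :=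
  (∃ f, IsGenEigenpair A B E f) ∧ ∀ E' f, IsGenEigenpair A B E' f → E ≤ E'

/-- Generalized eigenpair of the Galerkin (variational) approximation of the
pencil `(A, B)` in the subspace cut out by the predicate `P`. -/
def IsGalerkinGenEigenpair (A B : H1per → H1per → ℝ) (P : H1per → Prop)
    (E : ℝ) (f : H1per) : Prop :=
  P f ∧ (∃ x, f.f x ≠ 0) ∧ ∀ v : H1per, P v → A f v = E * B f v

/-- Lowest generalized eigenvalue of the Galerkin approximation. -/
def IsLowestGalerkinGenEigenvalue (A B : H1per → H1per → ℝ) (P : H1per → Prop)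
    (E : ℝ) : Prop :=
  (∃ f, IsGalerkinGenEigenpair A B P E f) ∧
    ∀ E' f, IsGalerkinGenEigenpair A B P E' f → E ≤ E'

/-- Membership in the span of the `M` plane waves `e^{2iπkx}`, `|k| ≤ M`
(written with real trigonometric functions). -/
def IsPlaneWave (M : ℕ) (u : H1per) : Prop :=
  ∃ A B : ℕ → ℝ,
    (∀ x : ℝ, u.f x = ∑ k ∈ Finset.range (M + 1),
      (A k * Real.cos (2 * Real.pi * k * x) + B k * Real.sin (2 * Real.pi * k * x))) ∧
    (∀ x : ℝ, u.f' x = ∑ k ∈ Finset.range (M + 1),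
      (2 * Real.pi * k) *
        (B k * Real.cos (2 * Real.pi * k * x) - A k * Real.sin (2 * Real.pi * k * x)))

/-- The periodized cut-off function `ρ_η(t) = Σ_{k∈ℤ} ρ((t-k)/η)`. -/
def ρperGen (ρ : ℝ → ℝ) (η t : ℝ) : ℝ := ∑' k : ℤ, ρ ((t - (k : ℝ)) / η)

/-- Gram matrix `G` of the sine functions `sin(2πjt)`, `1 ≤ j ≤ N`, for the
weight `ρ_η` on `(-η, η)`. -/
def GmatGen (N : ℕ) (ρ : ℝ → ℝ) (η : ℝ) : Matrix (Fin N) (Fin N) ℝ :=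
  Matrix.of fun j k => ∫ t in (-η)..η,
    ρperGen ρ η t * (Real.sin (2 * Real.pi * ((j : ℕ) + 1) * t) *
      Real.sin (2 * Real.pi * ((k : ℕ) + 1) * t))

/-- The odd projector functions `q̃_k = ρ_η · Σ_j (G⁻¹)_{jk} sin(2πj·)`. -/
def qtGen (N : ℕ) (ρ : ℝ → ℝ) (η : ℝ) (k : Fin N) : ℝ → ℝ :=
  fun x => ρperGen ρ η x *
    ∑ j : Fin N, (GmatGen N ρ η)⁻¹ j k * Real.sin (2 * Real.pi * ((j : ℕ) + 1) * x)

/-- The polynomials `P_k(t) = (t²-1)^k / (2^k k!)`. -/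
def Ppoly (k : ℕ) (t : ℝ) : ℝ := (t ^ 2 - 1) ^ k / ((2 : ℝ) ^ k * (Nat.factorial k : ℝ))

/-- Parameters of the one-dimensional double Dirac PAW setting: atomic
positions `0` and `a`, charges `Z₀, Z_a`, number of PAW functions `N`,
smoothness parameter `d`, cut-off shape `ρ` and pseudopotential shape `χ`. -/
structure PAWSetting where
  a : ℝ
  Z0 : ℝ
  Za : ℝ
  N : ℕ
  d : ℕ
  ρ : ℝ → ℝ
  χ : ℝ → ℝ
  ha0 : 0 < a
  ha1 : a < 1
  hZ0 : 0 < Z0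
  hZa : 0 < Za
  hN : 1 ≤ N
  hd : N ≤ d
  ρ_smooth : ContDiff ℝ (⊤ : ℕ∞) ρ
  ρ_nonneg : ∀ x, 0 ≤ ρ x
  ρ_pos : ∀ x ∈ Set.Ioo (-1 : ℝ) 1, 0 < ρ x
  ρ_supp : ∀ x : ℝ, 1 < |x| → ρ x = 0
  χ_smooth : ContDiff ℝ (⊤ : ℕ∞) χ
  χ_nonneg : ∀ x, 0 ≤ χ x
  χ_supp : ∀ x : ℝ, 1 < |x| → χ x = 0
  χ_int : (∫ x in (-1 : ℝ)..1, χ x) = 1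

namespace PAWSetting

variable (S : PAWSetting)

/-- Position of a site: `false ↦ 0`, `true ↦ a`. -/
def pos (b : Bool) : ℝ := if b then S.a else 0

/-- Charge of a site: `false ↦ Z₀`, `true ↦ Z_a`. -/
def charge (b : Bool) : ℝ := if b then S.Za else S.Z0

/-- The periodized cut-off `ρ_η`. -/
def ρper (η t : ℝ) : ℝ := ρperGen S.ρ η t

/-- The periodized pseudopotential `χ_ε(x) = Σ_k (1/ε) χ((x-k)/ε)`. -/
def χper (ε x : ℝ) : ℝ := ∑' k : ℤ, (1 / ε) * S.χ ((x - (k : ℝ)) / ε)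

/-- Quadratic form of `H_ps = -d²/dx² - Z₀ χ_ε - Z_a χ_ε(·-a)` on raw pairs. -/
def aHpsRaw (ε : ℝ) (u u' v v' : ℝ → ℝ) : ℝ :=
  (∫ x in (0:ℝ)..1, u' x * v' x)
    - S.Z0 * ∫ x in (0:ℝ)..1, S.χper ε x * (u x * v x)
    - S.Za * ∫ x in (0:ℝ)..1, S.χper ε (x - S.a) * (u x * v x)

/-- Quadratic form of `H_ps` on `H¹_per`. -/
def aHps (ε : ℝ) (u v : H1per) : ℝ := S.aHpsRaw ε u.f u.f' v.f v.f'

/-- Quadratic form (over one period) of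
`δV = -Z₀χ_ε - Z_aχ_ε(·-a) + Z₀Σ_kδ_k + Z_aΣ_kδ_{k+a}`. -/
def dVraw (ε : ℝ) (u v : ℝ → ℝ) : ℝ :=
  S.Z0 * (u 0 * v 0) + S.Za * (u S.a * v S.a)
    - S.Z0 * ∫ x in (0:ℝ)..1, S.χper ε x * (u x * v x)
    - S.Za * ∫ x in (0:ℝ)..1, S.χper ε (x - S.a) * (u x * v x)

/-- The pairing `⟨u, δV v⟩_{I,η}` truncated to the interval `(I-η, I+η)`
around the site `I` (which contains exactly the Dirac mass at `I`). -/
def dVtrunc (ε η : ℝ) (b : Bool) (u v : ℝ → ℝ) : ℝ :=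
  S.charge b * (u (S.pos b) * v (S.pos b))
    - ∫ x in (S.pos b - η)..(S.pos b + η),
        (S.Z0 * S.χper ε x + S.Za * S.χper ε (x - S.a)) * (u x * v x)

/-- Gram matrix `G(P)` of the polynomials `P_k` for the weight `ρ`. -/
def GP : Matrix (Fin S.d) (Fin S.d) ℝ :=
  Matrix.of fun j k => ∫ t in (-1:ℝ)..1, S.ρ t * (Ppoly j t * Ppoly k t)

end PAWSetting

/-- The PAW atomic and pseudo wave functions at cut-off radius `η`:
`φ b i` are the (even about the site) eigenfunctions of the atomic
Hamiltonian at site `b` with eigenvalues `eps b i`, and `φt b i` the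
corresponding pseudo wave functions. -/
structure PAWFunctions (S : PAWSetting) (η : ℝ) where
  φ : Bool → Fin S.N → H1per
  φt : Bool → Fin S.N → H1per
  eps : Bool → Fin S.N → ℝ
  eps_mono : ∀ b, StrictMono (eps b)
  φ_nonzero : ∀ b i, ∃ x, (φ b i).f x ≠ 0
  φ_eigen : ∀ b i (v : H1per),
    aAtom (S.charge b) (S.pos b) (φ b i) v = eps b i * L2inner (φ b i).f v.f
  φ_even : ∀ b i (x : ℝ), (φ b i).f (S.pos b + x) = (φ b i).f (S.pos b - x)
  φt_eq : ∀ b i (x : ℝ), (∀ k : ℤ, η < |x - (S.pos b + (k : ℝ))|) →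
    (φt b i).f x = (φ b i).f x
  φt_poly : ∀ b i, ∃ q : Polynomial ℝ,
    q.natDegree ≤ 2 * S.d - 2 ∧ (∀ t : ℝ, q.eval (-t) = q.eval t) ∧
    (∀ x : ℝ, |x| ≤ η → (φt b i).f (S.pos b + x) = q.eval x) ∧
    (∀ k : ℕ, k ≤ S.d - 1 →
      ((fun p : Polynomial ℝ => p.derivative)^[k] q).eval η
        = iteratedDeriv k (φ b i).f (S.pos b + η))

namespace PAWFunctions

variable {S : PAWSetting} {η : ℝ} (D : PAWFunctions S η)

/-- `p_i^I = ρ_η(·-I) φ̃_i^I`. -/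
def p (b : Bool) (i : Fin S.N) : ℝ → ℝ :=
  fun x => S.ρper η (x - S.pos b) * (D.φt b i).f x

/-- The Gram matrix `B_I = (⟨p_i^I, φ̃_j^I⟩)`. -/
def B (b : Bool) : Matrix (Fin S.N) (Fin S.N) ℝ :=
  Matrix.of fun i j => L2inner (D.p b i) (D.φt b j).f

/-- The projector functions `p̃_k^I = Σ_j (B_I⁻¹)_{kj} p_j^I`. -/
def pt (b : Bool) (k : Fin S.N) : ℝ → ℝ :=
  fun x => ∑ j : Fin S.N, (D.B b)⁻¹ k j * D.p b j x

/-- The coefficients `⟨p̃_i^I, u⟩`. -/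
def c (b : Bool) (u : ℝ → ℝ) (i : Fin S.N) : ℝ := L2inner (D.pt b i) u

/-- The function `⟨p̃^I,u⟩ᵀ Φ_I`. -/
def projΦ (b : Bool) (u : ℝ → ℝ) : ℝ → ℝ :=
  fun x => ∑ i : Fin S.N, D.c b u i * (D.φ b i).f x

/-- The function `⟨p̃^I,u⟩ᵀ Φ_I'`. -/
def projΦ' (b : Bool) (u : ℝ → ℝ) : ℝ → ℝ :=
  fun x => ∑ i : Fin S.N, D.c b u i * (D.φ b i).f' x

/-- The function `⟨p̃^I,u⟩ᵀ Φ̃_I`. -/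
def projΦt (b : Bool) (u : ℝ → ℝ) : ℝ → ℝ :=
  fun x => ∑ i : Fin S.N, D.c b u i * (D.φt b i).f x

/-- The function `⟨p̃^I,u⟩ᵀ Φ̃_I'`. -/
def projΦt' (b : Bool) (u : ℝ → ℝ) : ℝ → ℝ :=
  fun x => ∑ i : Fin S.N, D.c b u i * (D.φt b i).f' x

/-- The matrix `A_I = (⟨p_i^I, φ_j^I⟩)`. -/
def A (b : Bool) : Matrix (Fin S.N) (Fin S.N) ℝ :=
  Matrix.of fun i j => L2inner (D.p b i) (D.φ b j).f

/-- The matrix `(⟨p̃_j^I, φ_k^I⟩)` of Assumption 2. -/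
def A2 (b : Bool) : Matrix (Fin S.N) (Fin S.N) ℝ :=
  Matrix.of fun j k => L2inner (D.pt b j) (D.φ b k).f

/-- The truncated PAW Hamiltonian form `⟨u, H^N v⟩`. -/
def hN (u v : H1per) : ℝ :=
  aH S.Z0 S.Za S.a u v + ∑ b : Bool, ∑ i : Fin S.N, ∑ j : Fin S.N,
    D.c b u.f i *
      (aH S.Z0 S.Za S.a (D.φ b i) (D.φ b j) - aH S.Z0 S.Za S.a (D.φt b i) (D.φt b j)) *
    D.c b v.f j

/-- The truncated PAW overlap form `⟨u, S^N v⟩`. -/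
def sN (u v : H1per) : ℝ :=
  L2inner u.f v.f + ∑ b : Bool, ∑ i : Fin S.N, ∑ j : Fin S.N,
    D.c b u.f i *
      (L2inner (D.φ b i).f (D.φ b j).f - L2inner (D.φt b i).f (D.φt b j).f) *
    D.c b v.f j

/-- The PAW Hamiltonian form with pseudopotential `⟨u, H^PAW v⟩`. -/
def hPAW (ε : ℝ) (u v : H1per) : ℝ :=
  S.aHps ε u v + ∑ b : Bool, ∑ i : Fin S.N, ∑ j : Fin S.N,
    D.c b u.f i *
      (aH S.Z0 S.Za S.a (D.φ b i) (D.φ b j) - S.aHps ε (D.φt b i) (D.φt b j)) *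
    D.c b v.f j

/-- `(Id + T_N)u` as a raw function. -/
def idT (u : H1per) : ℝ → ℝ :=
  fun x => u.f x + ∑ b : Bool, ∑ i : Fin S.N,
    D.c b u.f i * ((D.φ b i).f x - (D.φt b i).f x)

/-- Weak derivative of `(Id + T_N)u`. -/
def idT' (u : H1per) : ℝ → ℝ :=
  fun x => u.f' x + ∑ b : Bool, ∑ i : Fin S.N,
    D.c b u.f i * ((D.φ b i).f' x - (D.φt b i).f' x)

/-- The VPAW Hamiltonian form `⟨u, H̃ v⟩ = ⟨(Id+T_N)u, H (Id+T_N)v⟩`. -/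
def hV (u v : H1per) : ℝ :=
  aHraw S.Z0 S.Za S.a (D.idT u) (D.idT' u) (D.idT v) (D.idT' v)

/-- The VPAW overlap form `⟨u, S̃ v⟩ = ⟨(Id+T_N)u, (Id+T_N)v⟩`. -/
def sV (u v : H1per) : ℝ := L2inner (D.idT u) (D.idT v)

end PAWFunctions

/-- A family of PAW functions, one for each cut-off radius `0 < η ≤ η₀`. -/
structure PAWFamily (S : PAWSetting) (η₀ : ℝ) where
  hη₀ : 0 < η₀
  hη₀' : η₀ < min (S.a / 2) ((1 - S.a) / 2)
  data : ∀ η : ℝ, 0 < η → η ≤ η₀ → PAWFunctions S η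

/-- Assumption 1: the projector functions are well-defined, i.e. the Gram
matrices `B_I` are invertible, for all `0 < η ≤ η₀`. -/
def PAWFamily.Assumption1 {S : PAWSetting} {η₀ : ℝ} (F : PAWFamily S η₀) : Prop :=
  ∀ (η : ℝ) (h1 : 0 < η) (h2 : η ≤ η₀) (b : Bool), IsUnit ((F.data η h1 h2).B b)

/-- Assumption 2: the matrices `(⟨p̃_j^I, φ_k^I⟩)` are invertible, for all
`0 < η ≤ η₀`. -/
def PAWFamily.Assumption2 {S : PAWSetting} {η₀ : ℝ} (F : PAWFamily S η₀) : Prop :=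
  ∀ (η : ℝ) (h1 : 0 < η) (h2 : η ≤ η₀) (b : Bool), IsUnit ((F.data η h1 h2).A2 b)

namespace VPAWproof

theorem ae_hasDeriv (u : H1per) : ∀ᵐ x : ℝ, HasDerivAt u.f (u.f' x) x := by
  have hl : LocallyIntegrable u.f' volume := by
    intro x
    refine ⟨Set.Ioo (x - 1) (x + 1), Ioo_mem_nhds (by linarith) (by linarith), ?_⟩
    have h := (intervalIntegrable_iff_integrableOn_Ioc_of_le (by linarith)).1
      (u.locInt (x - 1) (x + 1))
    exact h.mono_set Set.Ioo_subset_Ioc_self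
  filter_upwards [_root_.LocallyIntegrable.ae_hasDerivAt_integral hl] with x hx
  have h2 := (hx 0).const_add (u.f 0)
  have : u.f = fun y => u.f 0 + ∫ t in (0:ℝ)..y, u.f' t := funext u.ftc
  rw [this]
  simpa using h2

/-- Square-integrable pairs. -/
def V : Submodule ℝ ((ℝ → ℝ) × (ℝ → ℝ)) where
  carrier := {p | MemLp p.1 2 (volume.restrict (Set.Ioc (0:ℝ) 1)) ∧
    MemLp p.2 2 (volume.restrict (Set.Ioc (0:ℝ) 1))}
  add_mem' := fun h1 h2 => ⟨h1.1.add h2.1, h1.2.add h2.2⟩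
  zero_mem' := ⟨MemLp.zero, MemLp.zero⟩
  smul_mem' := fun c _ h => ⟨h.1.const_smul c, h.2.const_smul c⟩

theorem ii {u v : ℝ → ℝ} (hu : MemLp u 2 (volume.restrict (Set.Ioc (0:ℝ) 1)))
    (hv : MemLp v 2 (volume.restrict (Set.Ioc (0:ℝ) 1))) :
    IntervalIntegrable (fun x => u x * v x) volume 0 1 := by
  rw [intervalIntegrable_iff_integrableOn_Ioc_of_le zero_le_one]
  exact hu.integrable_mul hv

theorem L2_add {u v w : ℝ → ℝ} (hu : MemLp u 2 (volume.restrict (Set.Ioc (0:ℝ) 1)))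
    (hv : MemLp v 2 (volume.restrict (Set.Ioc (0:ℝ) 1)))
    (hw : MemLp w 2 (volume.restrict (Set.Ioc (0:ℝ) 1))) :
    L2inner (u + v) w = L2inner u w + L2inner v w := by
  unfold L2inner
  rw [← intervalIntegral.integral_add (ii hu hw) (ii hv hw)]
  congr 1; ext x; simp; ring

theorem L2_smul (c : ℝ) (u w : ℝ → ℝ) : L2inner (c • u) w = c * L2inner u w := by
  unfold L2inner
  rw [← intervalIntegral.integral_const_mul]
  congr 1; ext x; simp; ring

theorem L2_comm (u w : ℝ → ℝ) : L2inner u w = L2inner w u := by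
  unfold L2inner
  congr 1; ext x; ring

theorem aHraw_eq (Z0 Za A : ℝ) (u u' v v' : ℝ → ℝ) :
    aHraw Z0 Za A u u' v v' = L2inner u' v' - Z0 * (u 0 * v 0) - Za * (u A * v A) := rfl

def BL : V →ₗ[ℝ] V →ₗ[ℝ] ℝ := LinearMap.mk₂ ℝ (fun p q => L2inner p.1.1 q.1.1)
  (fun a b c => L2_add a.2.1 b.2.1 c.2.1)
  (fun c a b => L2_smul c _ _)
  (fun a b c => by
    rw [L2_comm, L2_comm a.1.1, L2_comm a.1.1]; exact L2_add b.2.1 c.2.1 a.2.1)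
  (fun c a b => by rw [L2_comm, L2_comm a.1.1]; exact L2_smul c _ _)

theorem aH_comm (Z0 Za A : ℝ) (u u' v v' : ℝ → ℝ) :
    aHraw Z0 Za A u u' v v' = aHraw Z0 Za A v v' u u' := by
  rw [aHraw_eq, aHraw_eq, L2_comm]; ring

theorem aH_add (Z0 Za A : ℝ) (a b c : V) :
    aHraw Z0 Za A (a + b).1.1 (a + b).1.2 c.1.1 c.1.2 =
    aHraw Z0 Za A a.1.1 a.1.2 c.1.1 c.1.2 + aHraw Z0 Za A b.1.1 b.1.2 c.1.1 c.1.2 := by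
  simp only [aHraw_eq]
  have := L2_add a.2.2 b.2.2 c.2.2
  simp [this]; ring

theorem aH_smul (Z0 Za A : ℝ) (r : ℝ) (a c : V) :
    aHraw Z0 Za A (r • a).1.1 (r • a).1.2 c.1.1 c.1.2 =
    r • aHraw Z0 Za A a.1.1 a.1.2 c.1.1 c.1.2 := by
  simp only [aHraw_eq]
  have := L2_smul r a.1.2 c.1.2
  simp [this]; ring

def BH (Z0 Za A : ℝ) : V →ₗ[ℝ] V →ₗ[ℝ] ℝ :=
  LinearMap.mk₂ ℝ (fun p q => aHraw Z0 Za A p.1.1 p.1.2 q.1.1 q.1.2)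
  (aH_add Z0 Za A) (aH_smul Z0 Za A)
  (fun a b c => by
    rw [aH_comm, aH_add, aH_comm, aH_comm _ _ _ c.1.1])
  (fun c a b => by rw [aH_comm, aH_smul, aH_comm])

def toV (u : H1per) : V := ⟨(u.f, u.f'), by
  constructor
  · refine (memLp_two_iff_integrable_sq u.cont.aestronglyMeasurable).2 ?_
    exact (intervalIntegrable_iff_integrableOn_Ioc_of_le zero_le_one).1
      ((u.cont.pow 2).intervalIntegrable 0 1)
  · refine (memLp_two_iff_integrable_sq u.meas'.aestronglyMeasurable).2 ?_
    exact (intervalIntegrable_iff_integrableOn_Ioc_of_le zero_le_one).1 u.sqInt⟩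

theorem alg {W : Type*} [AddCommGroup W] [Module ℝ W] {n : ℕ} (B : W →ₗ[ℝ] W →ₗ[ℝ] ℝ)
    (hs : ∀ x y, B x y = B y x) (f : W) (c : Bool → Fin n → ℝ) (φ φt : Bool → Fin n → W)
    (h0 : ∀ i j, B (φ false i - φt false i) (φ true j - φt true j) = 0) :
    B (f + ∑ b : Bool, ∑ i, c b i • (φ b i - φt b i))
      (f + ∑ b : Bool, ∑ i, c b i • (φ b i - φt b i)) =
    (B f f + ∑ b : Bool, ∑ i, ∑ j, c b i * (B (φ b i) (φ b j) - B (φt b i) (φt b j)) * c b j)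
    + 2 * ∑ b : Bool, B (∑ i, c b i • φ b i - ∑ i, c b i • φt b i) (f - ∑ i, c b i • φt b i) := by
  have e1 : ∀ b, ∑ i, c b i • (φ b i - φt b i) = ∑ i, c b i • φ b i - ∑ i, c b i • φt b i := by
    intro b; simp [smul_sub]
  have e2 : ∀ b, ∑ i, ∑ j, c b i * (B (φ b i) (φ b j) - B (φt b i) (φt b j)) * c b j
      = B (∑ i, c b i • φ b i) (∑ i, c b i • φ b i)
        - B (∑ i, c b i • φt b i) (∑ i, c b i • φt b i) := by
    intro b
    simp only [map_sum, LinearMap.sum_apply, map_smul, LinearMap.smul_apply, smul_eq_mul,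
      ← Finset.sum_sub_distrib, Finset.mul_sum]
    rw [Finset.sum_comm]
    refine Finset.sum_congr rfl fun i _ => Finset.sum_congr rfl fun j _ => ?_
    ring
  have e3 : B (∑ i, c false i • (φ false i - φt false i))
      (∑ i, c true i • (φ true i - φt true i)) = 0 := by
    simp only [map_sum, LinearMap.sum_apply, map_smul, LinearMap.smul_apply, h0, smul_zero,
      Finset.sum_const_zero]
  rw [e1, e1] at e3
  simp only [Fintype.sum_bool, e1, e2]
  generalize ∑ i, c false i • φ false i = p at *
  generalize ∑ i, c true i • φ true i = q at *
  generalize ∑ i, c false i • φt false i = r at *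
  generalize ∑ i, c true i • φt true i = s at *
  have e4 := e3
  rw [hs] at e4
  simp only [map_add, map_sub, LinearMap.add_apply, LinearMap.sub_apply] at e3 e4 ⊢
  rw [hs f p, hs f q, hs f r, hs f s, hs r p, hs s q]
  linarith

section
variable {S : PAWSetting} {η : ℝ} (D : PAWFunctions S η)

theorem dist_lem (hη : η < min (S.a / 2) ((1 - S.a) / 2)) (x : ℝ) :
    ∃ b : Bool, ∀ᶠ y in nhds x, ∀ k : ℤ, η < |y - (S.pos b + (k : ℝ))| := by
  obtain ⟨η', h1, h2⟩ := exists_between hη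
  rw [lt_min_iff] at h2
  have key : ∃ b : Bool, ∀ k : ℤ, η' < |x - (S.pos b + (k : ℝ))| := by
    by_contra! hc
    obtain ⟨k, hk⟩ := hc false
    obtain ⟨m, hm⟩ := hc true
    simp only [PAWSetting.pos, abs_le] at hk hm
    norm_num at hk hm
    have ha0 := S.ha0
    have ha1 := S.ha1
    rcases le_or_gt k m with h | h
    · have : (k : ℝ) ≤ m := by exact_mod_cast h
      linarith [h2.1]
    · have : (m : ℝ) + 1 ≤ k := by exact_mod_cast h
      linarith [h2.2]
  obtain ⟨b, hb⟩ := key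
  refine ⟨b, ?_⟩
  filter_upwards [Metric.ball_mem_nhds x (sub_pos.2 h1)] with y hy k
  have h3 := hb k
  rw [Metric.mem_ball, Real.dist_eq, abs_sub_comm] at hy
  have := abs_sub_le x y (S.pos b + (k : ℝ))
  linarith

theorem zero_near (b : Bool) (i : Fin S.N) (x : ℝ)
    (h : ∀ᶠ y in nhds x, ∀ k : ℤ, η < |y - (S.pos b + (k : ℝ))|) :
    ∀ᶠ y in nhds x, (D.φ b i).f y - (D.φt b i).f y = 0 := by
  filter_upwards [h] with y hy
  rw [D.φt_eq b i y hy, sub_self]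

theorem prod_zero (hη : η < min (S.a / 2) ((1 - S.a) / 2)) (i j : Fin S.N) (x : ℝ) :
    ((D.φ false i).f x - (D.φt false i).f x) * ((D.φ true j).f x - (D.φt true j).f x) = 0 := by
  obtain ⟨b, hb⟩ := dist_lem hη x
  cases b
  · rw [(zero_near D _ i x hb).self_of_nhds, zero_mul]
  · rw [(zero_near D _ j x hb).self_of_nhds, mul_zero]

theorem prod_zero' (hη : η < min (S.a / 2) ((1 - S.a) / 2)) (i j : Fin S.N) :
    ∀ᵐ x : ℝ, ((D.φ false i).f' x - (D.φt false i).f' x) *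
      ((D.φ true j).f' x - (D.φt true j).f' x) = 0 := by
  filter_upwards [ae_hasDeriv (D.φ false i), ae_hasDeriv (D.φt false i),
    ae_hasDeriv (D.φ true j), ae_hasDeriv (D.φt true j)] with x h1 h2 h3 h4
  obtain ⟨b, hb⟩ := dist_lem hη x
  have z : ∀ {g : ℝ → ℝ} {d : ℝ}, HasDerivAt g d x → (∀ᶠ y in nhds x, g y = 0) → d = 0 := by
    intro g d hg h0
    exact hg.unique ((hasDerivAt_const x (0:ℝ)).congr_of_eventuallyEq h0)
  cases b
  · rw [z (h1.sub h2) (zero_near D _ i x hb), zero_mul]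
  · rw [z (h3.sub h4) (zero_near D _ j x hb), mul_zero]

theorem crossL (hη : η < min (S.a / 2) ((1 - S.a) / 2)) (i j : Fin S.N) :
    BL (toV (D.φ false i) - toV (D.φt false i)) (toV (D.φ true j) - toV (D.φt true j)) = 0 := by
  change ∫ x in (0:ℝ)..1, ((D.φ false i).f x - (D.φt false i).f x) *
    ((D.φ true j).f x - (D.φt true j).f x) = 0
  simp [prod_zero D hη]

theorem crossH (hη : η < min (S.a / 2) ((1 - S.a) / 2)) (i j : Fin S.N) :
    BH S.Z0 S.Za S.a
      (toV (D.φ false i) - toV (D.φt false i)) (toV (D.φ true j) - toV (D.φt true j)) = 0 := by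
  change (∫ x in (0:ℝ)..1, ((D.φ false i).f' x - (D.φt false i).f' x) *
    ((D.φ true j).f' x - (D.φt true j).f' x)) -
    S.Z0 * (((D.φ false i).f 0 - (D.φt false i).f 0) *
      ((D.φ true j).f 0 - (D.φt true j).f 0)) -
    S.Za * (((D.φ false i).f S.a - (D.φt false i).f S.a) *
      ((D.φ true j).f S.a - (D.φt true j).f S.a)) = 0
  rw [prod_zero D hη, prod_zero D hη,
    intervalIntegral.integral_zero_ae ((prod_zero' D hη i j).mono fun x hx _ => hx)]
  simp

theorem idT_eq (f : H1per) :
    (toV f + ∑ b : Bool, ∑ i, D.c b f.f i • (toV (D.φ b i) - toV (D.φt b i))).1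
      = (D.idT f, D.idT' f) := by
  apply Prod.ext <;> ext x <;>
  simp [toV, PAWFunctions.idT, PAWFunctions.idT', Prod.fst_sum, Prod.snd_sum, Finset.sum_apply]

theorem g_eq (f : H1per) (b : Bool) :
    (∑ i, D.c b f.f i • toV (D.φ b i) - ∑ i, D.c b f.f i • toV (D.φt b i)).1
      = ((fun x => D.projΦ b f.f x - D.projΦt b f.f x),
         (fun x => D.projΦ' b f.f x - D.projΦt' b f.f x)) := by
  apply Prod.ext <;> ext x <;>
  simp [toV, PAWFunctions.projΦ, PAWFunctions.projΦt, PAWFunctions.projΦ',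
    PAWFunctions.projΦt', Prod.fst_sum, Prod.snd_sum, Finset.sum_apply]

theorem r_eq (f : H1per) (b : Bool) :
    (toV f - ∑ i, D.c b f.f i • toV (D.φt b i)).1
      = ((fun x => f.f x - D.projΦt b f.f x),
         (fun x => f.f' x - D.projΦt' b f.f x)) := by
  apply Prod.ext <;> ext x <;>
  simp [toV, PAWFunctions.projΦt,
    PAWFunctions.projΦt', Prod.fst_sum, Prod.snd_sum, Finset.sum_apply]

theorem BH_app (Z0 Za A : ℝ) (p q : V) :
    BH Z0 Za A p q = aHraw Z0 Za A p.1.1 p.1.2 q.1.1 q.1.2 := rfl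

theorem BL_app (p q : V) : BL p q = L2inner p.1.1 q.1.1 := rfl

end

end VPAWproof

/-- **Proposition (relation between the VPAW and truncated PAW forms).** -/
theorem vpaw_paw_form_identity
    (S : PAWSetting) (η₀ : ℝ) (F : PAWFamily S η₀) (hA1 : F.Assumption1) :
    ∀ (η : ℝ) (h1 : 0 < η) (h2 : η ≤ η₀) (f : H1per),
      ((F.data η h1 h2).hV f f
        = (F.data η h1 h2).hN f f
          + 2 * ∑ b : Bool,
              aHraw S.Z0 S.Za S.a
                (fun x => (F.data η h1 h2).projΦ b f.f x - (F.data η h1 h2).projΦt b f.f x)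
                (fun x => (F.data η h1 h2).projΦ' b f.f x - (F.data η h1 h2).projΦt' b f.f x)
                (fun x => f.f x - (F.data η h1 h2).projΦt b f.f x)
                (fun x => f.f' x - (F.data η h1 h2).projΦt' b f.f x)) ∧
      ((F.data η h1 h2).sV f f
        = (F.data η h1 h2).sN f f
          + 2 * ∑ b : Bool,
              L2inner
                (fun x => (F.data η h1 h2).projΦ b f.f x - (F.data η h1 h2).projΦt b f.f x)
                (fun x => f.f x - (F.data η h1 h2).projΦt b f.f x)) := by
  intro η h1 h2 f
  have hη : η < min (S.a / 2) ((1 - S.a) / 2) := lt_of_le_of_lt h2 F.hη₀'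
  generalize F.data η h1 h2 = D
  constructor
  · have h := VPAWproof.alg (VPAWproof.BH S.Z0 S.Za S.a)
      (fun x y => VPAWproof.aH_comm _ _ _ _ _ _ _) (VPAWproof.toV f) (fun b => D.c b f.f)
      (fun b i => VPAWproof.toV (D.φ b i)) (fun b i => VPAWproof.toV (D.φt b i))
      (VPAWproof.crossH D hη)
    simp only [VPAWproof.BH_app, VPAWproof.idT_eq, VPAWproof.g_eq, VPAWproof.r_eq] at h
    exact h
  · have h := VPAWproof.alg VPAWproof.BL
      (fun x y => VPAWproof.L2_comm _ _) (VPAWproof.toV f) (fun b => D.c b f.f)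
      (fun b i => VPAWproof.toV (D.φ b i)) (fun b i => VPAWproof.toV (D.φt b i))
      (VPAWproof.crossL D hη)
    simp only [VPAWproof.BL_app, VPAWproof.idT_eq, VPAWproof.g_eq, VPAWproof.r_eq] at h
    exact h
end
end

section
/- Let N ≥ 1, 0 < η < 1/2, ρ a smooth positive function supported in [−1,1] and ρ_η(t) = Σ_{k∈ℤ} ρ((t−k)/η). For the sine functions θ̃_k(x) = sin(2πkx), 1 ≤ k ≤ N, let G = (∫_{−η}^{η} ρ_η(t) sin(2πjt) sin(2πkt) dt)_{1≤j,k≤N} (which is invertible) and q̃_k(x) = ρ_η(x) Σ_{j=1}^N (G^{−1})_{jk} θ̃_j(x), and set Θ̃ = (θ̃_1,…,θ̃_N)ᵀ, ⟨q̃,f⟩ = (⟨q̃_1,f⟩,…,⟨q̃_N,f⟩)ᵀ. Then there exists a constant C independent of η such that for all f ∈ H¹_per(0,1) and all x ∈ (−η,η): |⟨q̃,f⟩ᵀ Θ̃(x)| ≤ C ‖f‖_{L^∞(−η,η)}. -/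
open MeasureTheory Real

noncomputable section

lemma aux_coef (n : ℕ) : ∃ K : ℝ, 0 < K ∧ ∀ a : Fin n → ℝ,
    ‖a‖ ≤ K * ∫ s in (-1:ℝ)..1, |∑ i, a i * s ^ (i : ℕ)| := by
  let Φ : (Fin n → ℝ) → ℝ := fun a => ∫ s in (-1:ℝ)..1, |∑ i, a i * s ^ (i : ℕ)|
  have hΦc : Continuous Φ := by
    apply intervalIntegral.continuous_parametric_intervalIntegral_of_continuous'
    simp only [Function.uncurry_def]
    fun_prop
  have hpos : ∀ a : Fin n → ℝ, a ≠ 0 → 0 < Φ a := by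
    intro a ha
    by_contra hcon
    have hcont : Continuous (fun s : ℝ => |∑ i, a i * s ^ (i : ℕ)|) := by fun_prop
    have hex : ∃ s ∈ Set.Icc (-1:ℝ) 1, (∑ i, a i * s ^ (i : ℕ)) ≠ 0 := by
      by_contra! hall
      apply ha
      let p : Polynomial ℝ := ∑ i : Fin n, Polynomial.monomial (i : ℕ) (a i)
      have hp0 : p = 0 := by
        apply Polynomial.eq_zero_of_infinite_isRoot
        apply Set.Infinite.mono (s := Set.Icc (-1:ℝ) 1)
        · intro s hs
          have := hall s hs
          simp only [p, Set.mem_setOf_eq, Polynomial.IsRoot, Polynomial.eval_finset_sum,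
            Polynomial.eval_monomial]
          exact this
        · exact Set.Icc_infinite (by norm_num)
      funext i
      have h1 : p.coeff (i : ℕ) = a i := by
        simp only [p, Polynomial.finset_sum_coeff, Polynomial.coeff_monomial]
        simp [Fin.val_inj]
      rw [← h1, hp0]; simp
    obtain ⟨s, hs, hne⟩ := hex
    apply hcon
    apply intervalIntegral.integral_pos (by norm_num) hcont.continuousOn
    · intro x _; positivity
    · exact ⟨s, hs, abs_pos.mpr hne⟩
  rcases Nat.eq_zero_or_pos n with rfl | hn
  · refine ⟨1, one_pos, fun a => ?_⟩
    simp [Subsingleton.elim a 0]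
  haveI : Nonempty (Fin n) := ⟨⟨0, hn⟩⟩
  obtain ⟨a0, ha0, hmin⟩ := (isCompact_sphere (0 : Fin n → ℝ) 1).exists_isMinOn
    (NormedSpace.sphere_nonempty.mpr zero_le_one) hΦc.continuousOn
  have ha0n : a0 ≠ 0 := by
    rintro rfl; simp at ha0
  have hm := hpos a0 ha0n
  refine ⟨(Φ a0)⁻¹, inv_pos.mpr hm, fun a => ?_⟩
  by_cases ha : a = 0
  · subst ha; simp
  have hna : 0 < ‖a‖ := norm_pos_iff.mpr ha
  have h1 : Φ a0 ≤ Φ (‖a‖⁻¹ • a) := by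
    apply hmin
    simp [norm_smul, hna.ne']
  have h2 : Φ (‖a‖⁻¹ • a) = ‖a‖⁻¹ * Φ a := by
    simp only [Φ]
    rw [← intervalIntegral.integral_const_mul]
    congr 1; funext s
    rw [← abs_of_pos (inv_pos.mpr hna), ← abs_mul, Finset.mul_sum, abs_of_pos (inv_pos.mpr hna)]
    congr 1
    apply Finset.sum_congr rfl
    intro i _
    simp [mul_assoc]
  rw [h2] at h1
  change ‖a‖ ≤ (Φ a0)⁻¹ * Φ a
  rw [inv_mul_eq_div, le_div_iff₀ hm]
  rw [inv_mul_eq_div, le_div_iff₀ hna] at h1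
  linarith

lemma aux_poly (n : ℕ) : ∃ K : ℝ, 0 < K ∧ ∀ P : Polynomial ℝ, P.natDegree < n →
    ∀ Y : ℝ, 0 < Y → ∀ y : ℝ, |y| ≤ 2 * Y →
      |P.eval y| ≤ K / Y * ∫ t in (-Y)..Y, |P.eval t| := by
  obtain ⟨K, hK, h⟩ := aux_coef n
  refine ⟨(n * 2 ^ n + 1) * K, by positivity, fun P hP Y hY y hy => ?_⟩
  let a : Fin n → ℝ := fun i => P.coeff i * Y ^ (i : ℕ)
  have hev : ∀ s : ℝ, ∑ i, a i * s ^ (i : ℕ) = P.eval (Y * s) := by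
    intro s
    rw [Polynomial.eval_eq_sum_range' hP, Finset.sum_range]
    apply Finset.sum_congr rfl
    intro i _
    simp only [a]; rw [mul_pow]; ring
  have h1 := h a
  simp only [hev] at h1
  have h2 : ∫ s in (-1:ℝ)..1, |P.eval (Y * s)| = Y⁻¹ * ∫ t in (-Y)..Y, |P.eval t| := by
    rw [intervalIntegral.integral_comp_mul_left (fun t => |P.eval t|) hY.ne']
    simp
  rw [h2] at h1
  have h3 : |P.eval y| ≤ (n * 2 ^ n) * ‖a‖ := by
    have hy' : y = Y * (y / Y) := by field_simp
    rw [hy', ← hev]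
    have hs : |y / Y| ≤ 2 := by
      rw [abs_div, abs_of_pos hY, div_le_iff₀ hY]; exact hy
    calc |∑ i, a i * (y / Y) ^ (i : ℕ)| ≤ ∑ i, |a i * (y / Y) ^ (i : ℕ)| :=
          Finset.abs_sum_le_sum_abs _ _
      _ ≤ ∑ i : Fin n, ‖a‖ * 2 ^ n := by
          apply Finset.sum_le_sum
          intro i _
          rw [abs_mul, abs_pow]
          have e1 : |a i| ≤ ‖a‖ := norm_le_pi_norm a i
          have e2 : |y / Y| ^ (i : ℕ) ≤ 2 ^ n :=
            (pow_le_pow_left₀ (abs_nonneg _) hs _).trans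
              (pow_le_pow_right₀ (by norm_num) i.2.le)
          gcongr
      _ = (n * 2 ^ n) * ‖a‖ := by simp; ring
  have hn0 : 0 ≤ ‖a‖ := norm_nonneg a
  calc |P.eval y| ≤ (n * 2 ^ n) * ‖a‖ := h3
    _ ≤ (n * 2 ^ n + 1) * ‖a‖ := by linarith
    _ ≤ (n * 2 ^ n + 1) * (K * (Y⁻¹ * ∫ t in (-Y)..Y, |P.eval t|)) := by gcongr
    _ = _ := by rw [div_eq_mul_inv]; ring

lemma aux_sq (N : ℕ) (c : Fin N → ℝ) : ∃ R : Polynomial ℝ, R.natDegree < 4 * N + 5 ∧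
    ∀ x : ℝ, (∑ k : Fin N, c k * Real.sin (2 * Real.pi * ((k : ℕ) + 1) * x)) ^ 2
      = R.eval (Real.sin (Real.pi * x)) := by
  open Polynomial in
  let Q : ℝ[X] := ∑ k : Fin N, C (c k) * Chebyshev.U ℝ ((k : ℕ) : ℤ)
  have hQ : Q.natDegree ≤ N := by
    apply natDegree_sum_le_of_forall_le
    intro k _
    refine (natDegree_C_mul_le _ _).trans ?_
    rw [Chebyshev.natDegree_U_natCast]
    exact k.2.le
  have hL : (1 - C 2 * X ^ 2 : ℝ[X]).natDegree ≤ 2 := by compute_degree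
  refine ⟨(C 4 * X ^ 2 * (1 - X ^ 2)) * (Q.comp (1 - C 2 * X ^ 2)) ^ 2, ?_, ?_⟩
  · have h1 : (C 4 * X ^ 2 * (1 - X ^ 2) : ℝ[X]).natDegree ≤ 4 := by compute_degree
    have h2 : (Q.comp (1 - C 2 * X ^ 2)).natDegree ≤ N * 2 :=
      natDegree_comp_le.trans (Nat.mul_le_mul hQ hL)
    have h3 := natDegree_pow_le_of_le 2 h2
    have h4 := natDegree_mul_le_of_le h1 h3
    omega
  · intro x
    have hs : ∑ k : Fin N, c k * Real.sin (2 * Real.pi * ((k : ℕ) + 1) * x)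
        = Real.sin (2 * (Real.pi * x)) * Q.eval (Real.cos (2 * (Real.pi * x))) := by
      simp only [Q, eval_finset_sum, eval_mul, eval_C, Finset.mul_sum]
      apply Finset.sum_congr rfl
      intro k _
      have := Chebyshev.U_real_cos (2 * (Real.pi * x)) ((k : ℕ) : ℤ)
      have e : 2 * Real.pi * ((k : ℕ) + 1) * x = ((((k : ℕ) : ℤ) : ℝ) + 1) * (2 * (Real.pi * x)) := by
        push_cast; ring
      rw [e, ← this]; ring
    rw [hs]
    simp only [eval_mul, eval_pow, eval_sub, eval_C, eval_X, eval_one, eval_comp]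
    have hc : Real.cos (2 * (Real.pi * x)) = 1 - 2 * Real.sin (Real.pi * x) ^ 2 := by
      rw [Real.cos_two_mul]
      have := Real.sin_sq_add_cos_sq (Real.pi * x)
      linarith
    rw [hc, Real.sin_two_mul, mul_pow, mul_pow, mul_pow, Real.cos_sq']
    ring

/-- Uniform Nikolskii-type inequality. -/
lemma aux_nik (N : ℕ) : ∃ K : ℝ, 0 < K ∧ ∀ c : Fin N → ℝ, ∀ η : ℝ, 0 < η → η < 1 / 2 →
    ∀ x ∈ Set.Ioo (-η) η,
    (∑ k : Fin N, c k * Real.sin (2 * Real.pi * ((k : ℕ) + 1) * x)) ^ 2 ≤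
      K / η * ∫ t in (-(η / 2))..(η / 2),
        (∑ k : Fin N, c k * Real.sin (2 * Real.pi * ((k : ℕ) + 1) * t)) ^ 2 := by
  obtain ⟨K, hK, h⟩ := aux_poly (4 * N + 5)
  have hpi := Real.pi_pos
  refine ⟨K * Real.pi, by positivity, fun c η h0 h1 x hx => ?_⟩
  obtain ⟨R, hR, hRe⟩ := aux_sq N c
  set Y := Real.sin (Real.pi * (η / 2)) with hYdef
  have hYη : η ≤ Y := by
    have := Real.mul_le_sin (x := Real.pi * (η / 2)) (by positivity) (by nlinarith)
    have e : 2 / Real.pi * (Real.pi * (η / 2)) = η := by field_simp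
    rw [e] at this; exact this
  have hY : 0 < Y := h0.trans_le hYη
  have hxa : |x| < η := abs_lt.mpr hx
  have hy : |Real.sin (Real.pi * x)| ≤ 2 * Y := by
    have e1 : |Real.sin (Real.pi * x)| ≤ Real.sin (Real.pi * η) := by
      rw [abs_le, ← Real.sin_neg]
      have := hx.1
      have := hx.2
      constructor
      · apply Real.sin_le_sin_of_le_of_le_pi_div_two <;> nlinarith
      · apply Real.sin_le_sin_of_le_of_le_pi_div_two <;> nlinarith
    have e2 : Real.sin (Real.pi * η) = 2 * Y * Real.cos (Real.pi * (η / 2)) := by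
      rw [hYdef, ← Real.sin_two_mul]; congr 1; ring
    have := Real.cos_le_one (Real.pi * (η / 2))
    nlinarith
  have key := h R hR Y hY _ hy
  have hsub : ∫ t in (-Y)..Y, |R.eval t| =
      ∫ t in (-(η / 2))..(η / 2), |R.eval (Real.sin (Real.pi * t))| *
        (Real.cos (Real.pi * t) * Real.pi) := by
    have := intervalIntegral.integral_comp_mul_deriv (a := -(η / 2)) (b := η / 2)
      (f := fun t => Real.sin (Real.pi * t)) (f' := fun t => Real.cos (Real.pi * t) * Real.pi)
      (g := fun y => |R.eval y|) ?_ ?_ ?_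
    · simp only [Function.comp_def] at this
      rw [this]
      simp [hYdef]
    · intro t _
      have h2 : HasDerivAt (fun t : ℝ => Real.pi * t) Real.pi t := by
        simpa using (hasDerivAt_id t).const_mul Real.pi
      exact h2.sin
    · fun_prop
    · fun_prop
  have hle : ∫ t in (-Y)..Y, |R.eval t| ≤ Real.pi * ∫ t in (-(η / 2))..(η / 2),
        (∑ k : Fin N, c k * Real.sin (2 * Real.pi * ((k : ℕ) + 1) * t)) ^ 2 := by
    rw [hsub, ← intervalIntegral.integral_const_mul]
    apply intervalIntegral.integral_mono_on (by linarith)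
    · apply Continuous.intervalIntegrable; fun_prop
    · apply Continuous.intervalIntegrable; fun_prop
    · intro t _
      rw [hRe t, abs_of_nonneg (by rw [← hRe t]; positivity)]
      have e1 := Real.cos_le_one (Real.pi * t)
      have e2 : 0 ≤ R.eval (Real.sin (Real.pi * t)) := by rw [← hRe t]; positivity
      have := mul_le_mul_of_nonneg_left e1 (mul_nonneg e2 hpi.le)
      nlinarith
  have hI : 0 ≤ ∫ t in (-(η / 2))..(η / 2),
        (∑ k : Fin N, c k * Real.sin (2 * Real.pi * ((k : ℕ) + 1) * t)) ^ 2 :=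
    intervalIntegral.integral_nonneg (by linarith) (fun t _ => by positivity)
  rw [hRe x]
  refine (le_abs_self _).trans (key.trans ?_)
  calc K / Y * ∫ t in (-Y)..Y, |R.eval t| ≤ K / Y * (Real.pi * _) := by gcongr
    _ ≤ K / η * (Real.pi * _) := by gcongr
    _ = _ := by ring

lemma aux_rho (ρ : ℝ → ℝ) (hc : Continuous ρ) (hs : ∀ x : ℝ, 1 < |x| → ρ x = 0)
    (x : ℝ) (hx : 1 ≤ |x|) : ρ x = 0 := by
  have hcl : IsClosed {x : ℝ | ρ x = 0} := isClosed_eq hc continuous_const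
  have hev : Filter.Tendsto (fun n : ℕ => x * (1 + 1 / ((n : ℝ) + 1))) Filter.atTop (nhds x) := by
    have := (tendsto_one_div_add_atTop_nhds_zero_nat (𝕜 := ℝ)).const_add 1
    simpa using this.const_mul x
  refine hcl.mem_of_tendsto hev (Filter.Eventually.of_forall fun n => ?_)
  apply hs
  have : (0:ℝ) < 1 / ((n : ℝ) + 1) := by positivity
  rw [abs_mul, abs_of_pos (by linarith : (0:ℝ) < 1 + 1 / ((n : ℝ) + 1))]
  nlinarith

lemma aux_per (ρ : ℝ → ℝ) (η : ℝ) : Function.Periodic (ρperGen ρ η) 1 := by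
  intro t
  unfold ρperGen
  rw [← (Equiv.addRight (1 : ℤ)).tsum_eq]
  congr 1; funext k
  simp only [Equiv.coe_addRight, Int.cast_add, Int.cast_one]
  congr 2; ring

lemma aux_eq (ρ : ℝ → ℝ) (hs : ∀ x : ℝ, 1 < |x| → ρ x = 0) (η : ℝ) (h0 : 0 < η) (h1 : η < 1 / 2)
    (t : ℝ) (ht : |t| ≤ 1 / 2) : ρperGen ρ η t = ρ (t / η) := by
  unfold ρperGen
  rw [tsum_eq_single (0 : ℤ)]
  · simp
  · intro k hk
    apply hs
    rw [abs_div, abs_of_pos h0, lt_div_iff₀ h0]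
    have : (1:ℝ) ≤ |(k : ℝ)| := by exact_mod_cast Int.one_le_abs hk
    have := abs_sub_abs_le_abs_sub (k : ℝ) t
    rw [abs_sub_comm] at this
    linarith

lemma aux_int (ρ : ℝ → ℝ) (hz : ∀ x : ℝ, 1 ≤ |x| → ρ x = 0) (hs : ∀ x : ℝ, 1 < |x| → ρ x = 0)
    (η : ℝ) (h0 : 0 < η) (h1 : η < 1 / 2)
    (g : ℝ → ℝ) (hg : Function.Periodic g 1) :
    ∫ t in (0:ℝ)..1, ρperGen ρ η t * g t = ∫ t in (-η)..η, ρ (t / η) * g t := by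
  have hp : Function.Periodic (fun t => ρperGen ρ η t * g t) 1 := (aux_per ρ η).mul hg
  have := hp.intervalIntegral_add_eq 0 (-(1/2))
  rw [zero_add] at this
  rw [this]
  norm_num
  rw [intervalIntegral.integral_of_le (by norm_num), intervalIntegral.integral_of_le (by linarith)]
  rw [← setIntegral_eq_of_subset_of_forall_diff_eq_zero (t := Set.Ioc (-(1/2)) (1/2))
    (s := Set.Ioc (-η) η) (f := fun t => ρ (t / η) * g t) measurableSet_Ioc]
  · norm_num
    apply setIntegral_congr_fun measurableSet_Ioc
    intro t ht
    simp only
    rw [aux_eq ρ hs η h0 h1 t (abs_le.mpr ⟨by linarith [ht.1], by linarith [ht.2]⟩)]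
  · exact Set.Ioc_subset_Ioc (by linarith) h1.le
  · intro t ht
    have : 1 ≤ |t / η| := by
      rw [abs_div, abs_of_pos h0, le_div_iff₀ h0, one_mul]
      by_contra! hlt
      rw [abs_lt] at hlt
      exact ht.2 ⟨hlt.1, hlt.2.le⟩
    rw [hz _ this, zero_mul]

lemma aux_proj (N : ℕ) (w f : ℝ → ℝ) (hw : Continuous w) (hw0 : ∀ t, 0 ≤ w t) (hf : Continuous f)
    (s : Fin N → ℝ → ℝ) (hs : ∀ k, Continuous (s k)) (η : ℝ) (h0 : 0 < η) (c : Fin N → ℝ)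
    (hc : ∀ j, ∑ k, (∫ t in (-η)..η, w t * (s j t * s k t)) * c k
      = ∫ t in (-η)..η, w t * (s j t * f t)) :
    ∫ t in (-η)..η, w t * (∑ k, c k * s k t) ^ 2 ≤ ∫ t in (-η)..η, w t * f t ^ 2 := by
  have hii : ∀ g : ℝ → ℝ, Continuous g → IntervalIntegrable g volume (-η) η :=
    fun g hg => hg.intervalIntegrable _ _
  have hpc : Continuous fun t => ∑ k, c k * s k t := by fun_prop
  have e1 : ∫ t in (-η)..η, w t * (∑ k, c k * s k t) ^ 2
      = ∑ j, c j * ∑ k, (∫ t in (-η)..η, w t * (s j t * s k t)) * c k := by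
    simp_rw [← intervalIntegral.integral_mul_const]
    simp_rw [Finset.mul_sum, ← intervalIntegral.integral_const_mul]
    rw [← Finset.sum_product', ← intervalIntegral.integral_finset_sum]
    · congr 1; funext t
      rw [sq, Finset.sum_mul_sum, Finset.mul_sum, Finset.sum_product]
      apply Finset.sum_congr rfl; intro j _
      rw [Finset.mul_sum]
      apply Finset.sum_congr rfl; intro k _
      simp only
      ring
    · intro jk _
      apply hii; fun_prop
  have e2 : ∫ t in (-η)..η, w t * ((∑ k, c k * s k t) * f t)
      = ∑ j, c j * ∫ t in (-η)..η, w t * (s j t * f t) := by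
    simp_rw [← intervalIntegral.integral_const_mul]
    rw [← intervalIntegral.integral_finset_sum]
    · congr 1; funext t
      rw [Finset.sum_mul, Finset.mul_sum]
      apply Finset.sum_congr rfl; intro j _
      ring
    · intro j _
      apply hii; fun_prop
  simp_rw [hc] at e1
  rw [← e2] at e1
  have e3 : 0 ≤ ∫ t in (-η)..η, w t * (f t - ∑ k, c k * s k t) ^ 2 :=
    intervalIntegral.integral_nonneg (by linarith) fun t _ => mul_nonneg (hw0 t) (sq_nonneg _)
  have e4 : ∫ t in (-η)..η, w t * (f t - ∑ k, c k * s k t) ^ 2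
      = (∫ t in (-η)..η, w t * f t ^ 2) - 2 * (∫ t in (-η)..η, w t * ((∑ k, c k * s k t) * f t))
        + ∫ t in (-η)..η, w t * (∑ k, c k * s k t) ^ 2 := by
    rw [← intervalIntegral.integral_const_mul, ← intervalIntegral.integral_sub,
      ← intervalIntegral.integral_add]
    · congr 1; funext t; ring
    all_goals (apply hii; fun_prop)
  linarith

/-- **Lemma (uniform bound on the odd projector expansion).** -/
theorem odd_projector_expansion_bound
    (N : ℕ) (hN : 1 ≤ N) (ρ : ℝ → ℝ)
    (hρs : ContDiff ℝ (⊤ : ℕ∞) ρ) (hρ0 : ∀ x, 0 ≤ ρ x)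
    (hρp : ∀ x ∈ Set.Ioo (-1 : ℝ) 1, 0 < ρ x)
    (hρsupp : ∀ x : ℝ, 1 < |x| → ρ x = 0) :
    ∃ C : ℝ, ∀ (η : ℝ), 0 < η → η < 1 / 2 →
      IsUnit (GmatGen N ρ η) →
      ∀ (f : H1per) (x : ℝ), x ∈ Set.Ioo (-η) η →
        |∑ k : Fin N, L2inner (qtGen N ρ η k) f.f *
            Real.sin (2 * Real.pi * ((k : ℕ) + 1) * x)|
          ≤ C * supNormOn f.f (Set.Ioo (-η) η) := by
  have hρc : Continuous ρ := hρs.continuous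
  have hz := aux_rho ρ hρc hρsupp
  obtain ⟨K, hK, hnik⟩ := aux_nik N
  obtain ⟨m, hm, hmin⟩ : ∃ m : ℝ, 0 < m ∧ ∀ x ∈ Set.Icc (-(1/2):ℝ) (1/2), m ≤ ρ x := by
    obtain ⟨x0, hx0, h⟩ := (isCompact_Icc (a := (-(1/2):ℝ)) (b := 1/2)).exists_isMinOn
      ⟨0, by norm_num, by norm_num⟩ hρc.continuousOn
    exact ⟨ρ x0, hρp x0 ⟨by linarith [hx0.1], by linarith [hx0.2]⟩, fun x hx => h hx⟩
  set J := ∫ t in (-1:ℝ)..1, ρ t with hJ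
  refine ⟨Real.sqrt (K / m * J), ?_⟩
  intro η h0 h1 hG f x hx
  set w : ℝ → ℝ := fun t => ρ (t / η) with hwdef
  have hwc : Continuous w := by fun_prop
  set s : Fin N → ℝ → ℝ := fun k t => Real.sin (2 * Real.pi * ((k : ℕ) + 1) * t) with hsdef
  have hsc : ∀ k, Continuous (s k) := fun k => by simp only [hsdef]; fun_prop
  have hsp : ∀ k, Function.Periodic (s k) 1 := by
    intro k t
    simp only [hsdef]
    have := (Real.sin_periodic.nat_mul ((k : ℕ) + 1)) (2 * Real.pi * ((k : ℕ) + 1) * t)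
    rw [← this]; congr 1; push_cast; ring
  have hfc := f.cont
  set M := supNormOn f.f (Set.Ioo (-η) η) with hM
  have hMle : ∀ t ∈ Set.Ioo (-η) η, |f.f t| ≤ M := by
    intro t ht
    apply le_csSup
    · have hb := (isCompact_Icc (a := -η) (b := η)).bddAbove_image hfc.abs.continuousOn
      exact hb.mono (Set.image_mono Set.Ioo_subset_Icc_self)
    · exact ⟨t, ht, rfl⟩
  have hM0 : 0 ≤ M := (abs_nonneg _).trans (hMle x hx)
  set c : Fin N → ℝ := fun k => L2inner (qtGen N ρ η k) f.f with hcdef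
  set b : Fin N → ℝ := fun j => ∫ t in (-η)..η, w t * (s j t * f.f t) with hbdef
  have hGe : ∀ j k, GmatGen N ρ η j k = ∫ t in (-η)..η, w t * (s j t * s k t) := by
    intro j k
    simp only [GmatGen, Matrix.of_apply]
    apply intervalIntegral.integral_congr
    intro t ht
    rw [Set.uIcc_of_le (by linarith)] at ht
    simp only [hwdef, hsdef]
    rw [aux_eq ρ hρsupp η h0 h1 t (abs_le.mpr ⟨by linarith [ht.1], by linarith [ht.2]⟩)]
  have hGT : (GmatGen N ρ η).transpose = GmatGen N ρ η := by
    ext j k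
    rw [Matrix.transpose_apply, hGe, hGe]
    congr 1; funext t; ring
  have hcb : c = ((GmatGen N ρ η)⁻¹).mulVec b := by
    funext k
    have hsymm : ∀ j, (GmatGen N ρ η)⁻¹ j k = (GmatGen N ρ η)⁻¹ k j := by
      intro j
      rw [← Matrix.transpose_apply ((GmatGen N ρ η)⁻¹) k j, Matrix.transpose_nonsing_inv, hGT]
    have e : c k = ∫ t in (0:ℝ)..1, ρperGen ρ η t *
        ((∑ j : Fin N, (GmatGen N ρ η)⁻¹ j k * s j t) * f.f t) := by
      simp only [hcdef, L2inner, qtGen, hsdef]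
      congr 1; funext t; ring
    rw [e, aux_int ρ hz hρsupp η h0 h1]
    · simp only [Matrix.mulVec, dotProduct, hbdef]
      simp_rw [← intervalIntegral.integral_const_mul]
      rw [← intervalIntegral.integral_finset_sum]
      · congr 1; funext t
        rw [Finset.sum_mul, Finset.mul_sum]
        apply Finset.sum_congr rfl; intro j _
        rw [hsymm]; simp only [hwdef]; ring
      · intro j _
        apply Continuous.intervalIntegrable
        fun_prop
    · intro t
      simp only
      rw [f.periodic t]
      congr 1
      apply Finset.sum_congr rfl; intro j _
      rw [hsp j t]
  have hGc : (GmatGen N ρ η).mulVec c = b := by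
    rw [hcb, Matrix.mulVec_mulVec, Matrix.mul_nonsing_inv _ ((Matrix.isUnit_iff_isUnit_det _).mp hG),
      Matrix.one_mulVec]
  have hproj := aux_proj N w f.f hwc (fun t => hρ0 _) hfc s hsc η h0 c (by
    intro j
    have := congrFun hGc j
    simp only [Matrix.mulVec, dotProduct, hGe] at this
    exact this)
  have hup : ∫ t in (-η)..η, w t * f.f t ^ 2 ≤ M ^ 2 * (η * J) := by
    have e : η * J = ∫ t in (-η)..η, w t := by
      simp only [hwdef]
      rw [intervalIntegral.integral_comp_div _ h0.ne', neg_div, div_self h0.ne', smul_eq_mul]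
    rw [e, ← intervalIntegral.integral_const_mul]
    apply intervalIntegral.integral_mono_on (by linarith)
    · apply Continuous.intervalIntegrable; fun_prop
    · apply Continuous.intervalIntegrable; fun_prop
    · intro t _
      by_cases ht : |t| < η
      · have h2 := hMle t (abs_lt.mp ht)
        have h3 : f.f t ^ 2 ≤ M ^ 2 := by
          rw [← sq_abs]; gcongr
        have := mul_le_mul_of_nonneg_left h3 (hρ0 (t / η))
        simp only [hwdef]; linarith
      · have : w t = 0 := by
          apply hz
          rw [abs_div, abs_of_pos h0, le_div_iff₀ h0]; linarith
        simp [this]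
  have hlow : m * ∫ t in (-(η / 2))..(η / 2), (∑ k, c k * s k t) ^ 2
      ≤ ∫ t in (-η)..η, w t * (∑ k, c k * s k t) ^ 2 := by
    have e1 : ∫ t in (-(η / 2))..(η / 2), w t * (∑ k, c k * s k t) ^ 2
        ≤ ∫ t in (-η)..η, w t * (∑ k, c k * s k t) ^ 2 := by
      apply intervalIntegral.integral_mono_interval (by linarith) (by linarith) (by linarith)
      · exact Filter.Eventually.of_forall fun t => mul_nonneg (hρ0 _) (sq_nonneg _)
      · apply Continuous.intervalIntegrable; fun_prop
    refine le_trans ?_ e1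
    rw [← intervalIntegral.integral_const_mul]
    apply intervalIntegral.integral_mono_on (by linarith)
    · apply Continuous.intervalIntegrable; fun_prop
    · apply Continuous.intervalIntegrable; fun_prop
    · intro t ht
      apply mul_le_mul_of_nonneg_right _ (sq_nonneg _)
      apply hmin
      constructor
      · rw [le_div_iff₀ h0]; linarith [ht.1]
      · rw [div_le_iff₀ h0]; linarith [ht.2]
  have hfin := hnik c η h0 h1 x hx
  change _ ≤ K / η * ∫ t in (-(η / 2))..(η / 2), (∑ k, c k * s k t) ^ 2 at hfin
  have hJ0 : 0 ≤ J := intervalIntegral.integral_nonneg (by norm_num) fun t _ => hρ0 t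
  have hI : ∫ t in (-(η / 2))..(η / 2), (∑ k, c k * s k t) ^ 2 ≤ M ^ 2 * (η * J) / m := by
    rw [le_div_iff₀ hm]; linarith
  have hsq : (∑ k : Fin N, c k * Real.sin (2 * Real.pi * ((k : ℕ) + 1) * x)) ^ 2
      ≤ K / m * J * M ^ 2 := by
    refine hfin.trans ?_
    calc _ ≤ K / η * (M ^ 2 * (η * J) / m) := by gcongr
      _ = _ := by field_simp
  change |∑ k : Fin N, c k * Real.sin (2 * Real.pi * ((k : ℕ) + 1) * x)| ≤ _
  refine abs_le_of_sq_le_sq ?_ (by positivity)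
  rw [mul_pow, Real.sq_sqrt (by positivity)]
  exact hsq
end
end
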